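/- Let p ≥ 1, 1 ≤ r ≤ p, let α : ℝ → ℝ be an extended class-K function, and let g_1,…,g_p : ℝ → ℝ be differentiable. Define m(t) = max^r{g_k(t)}_{k=1}^p and, for each j with 1 ≤ j ≤ r, define m_j(t) = max^j{g_k(t)}_{k=1}^p. Assume that for all t ≥ 0 and all k: g_k'(t) ≥ −α( m(t) + |g_k(t) − m(t)| ). Then for every j with 1 ≤ j ≤ r and every t ≥ 0 at which m_j is differentiable, m_j'(t) ≥ −α(m_j(t)). (Differential bound on the j-th largest barrier value under the combinatorial CBF condition.) -/

import Mathlib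

/-!
Fix `t` and write `M` for the `j`-th largest value at `t`. At least `j` indices `k` satisfy
`g k t ≥ M`. For any slope `c < -α M`, each of these satisfies `g k s ≥ M + c * (s - t)` for `s > t`
close to `t`: if `g k t > M` this is continuity, and if `g k t = M` then `M ≥ m t` turns the
hypothesis into `deriv (g k) t ≥ -α M > c`. Hence at least `j` of the values at time `s` are
`≥ M + c * (s - t)`, so the `j`-th largest one is too (`le_kthLargest_iff`). Its right difference
quotients at `t` are thus eventually `≥ c`, so its derivative is `≥ c`; now let `c` tend to `-α M`.
-/

/-- The list of values of `f : Fin p → ℝ` sorted in nondecreasing order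
(counted with multiplicity). -/
noncomputable def sortedVals {p : ℕ} (f : Fin p → ℝ) : List ℝ :=
  (Finset.univ.val.map f).sort (· ≤ ·)

/-- `max^r f`: the `r`-th largest value of the family `f` (1-indexed). -/
noncomputable def kthLargest {p : ℕ} (f : Fin p → ℝ) (r : ℕ) : ℝ :=
  (sortedVals f).getD (p - r) 0

/-- `α : ℝ → ℝ` is of extended class-K if it is continuous, strictly
increasing, and vanishes at the origin. -/
def IsClassKe (α : ℝ → ℝ) : Prop :=
  Continuous α ∧ StrictMono α ∧ α 0 = 0

lemma le_getElem_iff_length_le_countP (c : ℝ) (l : List ℝ) (hl : l.Pairwise (· ≤ ·)) (i : ℕ)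
    (hi : i < l.length) : c ≤ l[i] ↔ l.length ≤ i + l.countP (fun x => decide (c ≤ x)) := by
  induction l generalizing i with
  | nil => simp at hi
  | cons a l ih =>
    rw [List.pairwise_cons] at hl
    have hle := List.countP_le_length (p := fun x => decide (c ≤ x)) (l := l)
    by_cases hca : c ≤ a
    · have hall : l.countP (fun x => decide (c ≤ x)) = l.length :=
        List.countP_eq_length.2 fun x hx => by simpa using hca.trans (hl.1 x hx)
      have hmem : c ≤ (a :: l)[i] := by
        rcases List.mem_cons.1 (List.getElem_mem hi) with h | h
        · rw [h]; exact hca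
        · exact hca.trans (hl.1 _ h)
      simp only [hmem, true_iff, List.countP_cons, hca, decide_true, if_true, hall,
        List.length_cons]
      omega
    · cases i with
      | zero =>
        simp only [List.getElem_cons_zero, hca, false_iff, List.countP_cons, decide_false,
          List.length_cons]
        simp
        omega
      | succ i =>
        have hi' : i < l.length := by simpa using hi
        simp only [List.getElem_cons_succ, ih hl.2 i hi', List.countP_cons, hca, decide_false,
          List.length_cons]
        simp
        omega

/-- Threshold characterization of order statistics: all that is used about `kthLargest`. -/
lemma le_kthLargest_iff {p : ℕ} (f : Fin p → ℝ) {j : ℕ} (h1 : 1 ≤ j) (hj : j ≤ p) (c : ℝ) :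
    c ≤ kthLargest f j ↔ j ≤ (Finset.univ.filter fun k => c ≤ f k).card := by
  have hlen : (sortedVals f).length = p := by simp [sortedVals]
  have hi : p - j < (sortedVals f).length := by omega
  have hsorted : (sortedVals f).Pairwise (· ≤ ·) := Multiset.pairwise_sort _ _
  have hcount : (sortedVals f).countP (fun x => decide (c ≤ x))
      = (Finset.univ.filter fun k => c ≤ f k).card := by
    rw [← Multiset.coe_countP (fun x => c ≤ x), sortedVals, Multiset.sort_eq, Multiset.countP_map]
    rfl
  rw [kthLargest, List.getD_eq_getElem _ _ hi, le_getElem_iff_length_le_countP c _ hsorted _ hi,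
    hcount, hlen]
  omega

lemma kthLargest_anti {p : ℕ} (f : Fin p → ℝ) {j r : ℕ} (h1 : 1 ≤ j) (hjr : j ≤ r) (hr : r ≤ p) :
    kthLargest f r ≤ kthLargest f j :=
  (le_kthLargest_iff f h1 (hjr.trans hr) _).2
    (hjr.trans ((le_kthLargest_iff f (h1.trans hjr) hr _).1 le_rfl))

/-- A differentiable function starting at or above `M`, and with slope exceeding `c` if it starts
exactly at `M`, stays above the line through `(t, M)` of slope `c` just to the right of `t`. -/
lemma eventually_line_le {h : ℝ → ℝ} {t M c : ℝ} (hd : DifferentiableAt ℝ h t) (hM : M ≤ h t)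
    (hc : h t = M → c < deriv h t) : ∀ᶠ s in nhdsWithin t (Set.Ioi t), M + c * (s - t) ≤ h s := by
  rcases hM.eq_or_lt with heq | hlt
  · have hs := (hasDerivWithinAt_iff_tendsto_slope' (by simp)).1
      (hd.hasDerivAt.hasDerivWithinAt (s := Set.Ioi t))
    filter_upwards [hs.eventually (lt_mem_nhds (hc heq.symm)), self_mem_nhdsWithin] with s h1 h2
    rw [slope_def_field, lt_div_iff₀ (sub_pos.2 h2)] at h1
    linarith
  · have hcont : ContinuousAt (fun s => h s - (M + c * (s - t))) t := by
      have := hd.continuousAt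
      fun_prop
    have hpos : 0 < h t - (M + c * (t - t)) := by simpa using hlt
    filter_upwards [nhdsWithin_le_nhds (hcont.eventually (lt_mem_nhds hpos))] with s hs
    linarith

/-- Differential bound on the `j`-th largest barrier value: under the
`p`-choose-`r` CBF condition with pivot `m = max^r {g_k}`, for every
`1 ≤ j ≤ r`, wherever `m_j(t) = max^j {g_k(t)}` is differentiable (for
`t ≥ 0`) one has `m_j'(t) ≥ -α(m_j(t))`. -/
theorem jth_largest_differential_bound {p : ℕ} (hp : 1 ≤ p) (r : ℕ)
    (hr1 : 1 ≤ r) (hrp : r ≤ p)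
    (α : ℝ → ℝ) (hα : IsClassKe α)
    (g : Fin p → ℝ → ℝ) (hg : ∀ k, Differentiable ℝ (g k))
    (m : ℝ → ℝ) (hm : m = fun t => kthLargest (fun k => g k t) r)
    (hineq : ∀ t, 0 ≤ t → ∀ k : Fin p,
      -α (m t + |g k t - m t|) ≤ deriv (g k) t) :
    ∀ j, 1 ≤ j → j ≤ r →
      ∀ t, 0 ≤ t →
        DifferentiableAt ℝ (fun s => kthLargest (fun k => g k s) j) t →
        -α (kthLargest (fun k => g k t) j) ≤
          deriv (fun s => kthLargest (fun k => g k s) j) t := by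
  intro j h1j hjr t ht hdiff
  set F : ℝ → ℝ := fun s => kthLargest (fun k => g k s) j with hF
  have hjp : j ≤ p := hjr.trans hrp
  change -α (F t) ≤ deriv F t
  refine le_of_forall_lt fun c hc => ?_
  obtain ⟨c', hcc', hc'⟩ := exists_between hc
  refine hcc'.trans_le ?_
  have hmM : m t ≤ F t := by
    rw [hm]
    exact kthLargest_anti _ h1j hjr hrp
  have hk : ∀ k, F t ≤ g k t →
      ∀ᶠ s in nhdsWithin t (Set.Ioi t), F t + c' * (s - t) ≤ g k s := by
    intro k hle
    refine eventually_line_le (hg k t) hle fun heq => hc'.trans_le ?_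
    have := hineq t ht k
    rwa [heq, abs_of_nonneg (sub_nonneg.2 hmM), add_sub_cancel] at this
  have hev : ∀ᶠ s in nhdsWithin t (Set.Ioi t), ∀ k, F t ≤ g k t →
      F t + c' * (s - t) ≤ g k s := by
    rw [Filter.eventually_all]
    intro k
    rw [Filter.eventually_imp_distrib_left]
    exact hk k
  have hs := (hasDerivWithinAt_iff_tendsto_slope' (by simp)).1
    (hdiff.hasDerivAt.hasDerivWithinAt (s := Set.Ioi t))
  refine ge_of_tendsto hs ?_
  filter_upwards [hev, self_mem_nhdsWithin] with s h1 h2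
  have hFs : F t + c' * (s - t) ≤ F s := by
    refine (le_kthLargest_iff _ h1j hjp _).2 ?_
    refine ((le_kthLargest_iff (fun k => g k t) h1j hjp (F t)).1 le_rfl).trans ?_
    exact Finset.card_le_card (Finset.monotone_filter_right _ fun k _ hk => h1 k hk)
  rw [slope_def_field, le_div_iff₀ (sub_pos.2 h2)]
  linarith
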